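/- arXiv:1801.09418 — 8 statements merged into one kernel-verified Lean document; each statement's English description precedes it below -/
import Mathlib

section
/- Let μ ∈ ℝ and let f : ℝ → ℝ be a measurable function such that f(x) ≥ 0 for all x ∈ ℝ and such that for every integrable real-valued random variable X with E(X) ≥ μ one has E(f(X)) ≤ 1. Then f(x) ≤ 1 for all x ∈ ℝ. -/
open MeasureTheory ProbabilityTheory Filter

/-- if `f ≥ 0` is measurable and `E(f(X)) ≤ 1` for every integrable random
variable `X` (on any probability space) with `E(X) ≥ μ`, then `f ≤ 1` everywhere. -/
theorem stmt4 (μ : ℝ) (f : ℝ → ℝ) (hfmeas : Measurable f) (hfnn : ∀ x, 0 ≤ f x)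
    (h : ∀ (Ω : Type) (_ : MeasurableSpace Ω) (P : Measure Ω), IsProbabilityMeasure P →
      ∀ X : Ω → ℝ, Integrable X P → μ ≤ ∫ ω, X ω ∂P → ∫ ω, f (X ω) ∂P ≤ 1) :
    ∀ x, f x ≤ 1 := by
  intro x
  by_contra! hx
  obtain ⟨p, hp⟩ : ∃ p : ℝ, p = 2 / (1 + f x) := ⟨_, rfl⟩
  have h1 : 0 < 1 + f x := by linarith
  have hp0 : 0 ≤ p := by rw [hp]; positivity
  have hp1 : p < 1 := by rw [hp, div_lt_one h1]; linarith
  have hpf : 1 < p * f x := by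
    rw [hp, div_mul_eq_mul_div, lt_div_iff₀ h1]; linarith
  obtain ⟨y, hy⟩ : ∃ y : ℝ, y = (μ - p * x) / (1 - p) := ⟨_, rfl⟩
  have hq : 0 < 1 - p := by linarith
  have hmean : p * x + (1 - p) * y = μ := by
    rw [hy, mul_div_cancel₀ _ hq.ne']; ring
  have hint : ∀ g : ℝ → ℝ, ∀ z c : ℝ,
      Integrable g (ENNReal.ofReal c • Measure.dirac z) := fun g z c =>
    (integrable_dirac (by simp)).smul_measure ENNReal.ofReal_ne_top
  have hval : ∀ g : ℝ → ℝ, ∫ ω, g ω ∂(ENNReal.ofReal p • Measure.dirac x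
      + ENNReal.ofReal (1 - p) • Measure.dirac y) = p * g x + (1 - p) * g y := by
    intro g
    rw [integral_add_measure (hint _ _ _) (hint _ _ _), integral_smul_measure,
      integral_smul_measure, integral_dirac, integral_dirac,
      ENNReal.toReal_ofReal hp0, ENNReal.toReal_ofReal hq.le, smul_eq_mul, smul_eq_mul]
  have key := h ℝ inferInstance (ENNReal.ofReal p • Measure.dirac x
      + ENNReal.ofReal (1 - p) • Measure.dirac y)
    ⟨by
      simp only [Measure.coe_add, Measure.coe_smul, Pi.add_apply, Pi.smul_apply, measure_univ,
        smul_eq_mul, mul_one]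
      rw [← ENNReal.ofReal_add hp0 hq.le]
      simp⟩
    (fun ω => ω) ((hint _ _ _).add_measure (hint _ _ _))
    (by rw [hval (fun ω => ω)]; exact hmean.ge)
  rw [hval f] at key
  have := mul_nonneg hq.le (hfnn y)
  linarith
end

section
/- Let T be an integrable random variable with T ≤ τ almost surely and μ < τ, and define λ(c) = E[log(1 − c·(T − μ)/(τ − μ))] for 0 ≤ c < 1. Then λ(c) is finite for every c ∈ [0,1), λ(0) = 0, λ is concave on (0,1) and continuous on [0,1), and if moreover P{T = μ} < 1 then λ is strictly concave on (0,1). -/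
open MeasureTheory ProbabilityTheory Filter

theorem aux_bound {c d x : ℝ} (hc : 0 ≤ c) (hcd : c ≤ d) (hd : d < 1) (hx : x ≤ 1) :
    |Real.log (1 - c * x)| ≤ |x| + -Real.log (1 - d) := by
  have h1 : 1 - d ≤ 1 - c * x := by nlinarith
  have h0 : 0 < 1 - d := by linarith
  have h2 := Real.log_le_log h0 h1
  have h3 := Real.log_le_sub_one_of_pos (h0.trans_le h1)
  have h4 : Real.log (1 - d) ≤ 0 := Real.log_nonpos h0.le (by linarith)
  have h5 : -(c * x) ≤ |x| := by
    have := neg_abs_le x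
    nlinarith [abs_nonneg x]
  rw [abs_le]
  constructor <;> linarith [abs_nonneg x]

theorem aux_concave {a b p q x : ℝ} (hp : p ∈ Set.Ioo (0 : ℝ) 1) (hq : q ∈ Set.Ioo (0 : ℝ) 1)
    (ha : 0 ≤ a) (hb : 0 ≤ b) (hab : a + b = 1) (hx : x ≤ 1) :
    a * Real.log (1 - p * x) + b * Real.log (1 - q * x) ≤
      Real.log (1 - (a * p + b * q) * x) := by
  have hp0 : 0 < 1 - p * x := by nlinarith [hp.1, hp.2]
  have hq0 : 0 < 1 - q * x := by nlinarith [hq.1, hq.2]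
  have h := strictConcaveOn_log_Ioi.concaveOn.2 hp0 hq0 ha hb hab
  simp only [smul_eq_mul] at h
  have e : a * (1 - p * x) + b * (1 - q * x) = 1 - (a * p + b * q) * x := by
    linear_combination hab
  rwa [e] at h

theorem aux_strict {a b p q x : ℝ} (hp : p ∈ Set.Ioo (0 : ℝ) 1) (hq : q ∈ Set.Ioo (0 : ℝ) 1)
    (hpq : p ≠ q)
    (ha : 0 < a) (hb : 0 < b) (hab : a + b = 1) (hx : x ≤ 1) (hx0 : x ≠ 0) :
    a * Real.log (1 - p * x) + b * Real.log (1 - q * x) <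
      Real.log (1 - (a * p + b * q) * x) := by
  have hp0 : 0 < 1 - p * x := by nlinarith [hp.1, hp.2]
  have hq0 : 0 < 1 - q * x := by nlinarith [hq.1, hq.2]
  have hne : 1 - p * x ≠ 1 - q * x := fun h => hpq (mul_right_cancel₀ hx0 (by linarith))
  have h := strictConcaveOn_log_Ioi.2 hp0 hq0 hne ha hb hab
  simp only [smul_eq_mul] at h
  have e : a * (1 - p * x) + b * (1 - q * x) = 1 - (a * p + b * q) * x := by
    linear_combination hab
  rwa [e] at h

/-- Lemma 3: properties of `λ(c) = E[log(1 − c·(T − μ)/(τ − μ))]` for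
`T ≤ τ` a.s. integrable and `μ < τ`: the defining integrand is integrable for each
`c ∈ [0,1)`, `λ(0) = 0`, `λ` is concave on `(0,1)` and continuous on `[0,1)`, and it is
strictly concave on `(0,1)` whenever `P{T = μ} < 1`. -/
theorem stmt6 {Ω : Type*} [MeasurableSpace Ω] (P : Measure Ω) [IsProbabilityMeasure P]
    (τ μ : ℝ) (hμτ : μ < τ)
    (T : Ω → ℝ) (hTmeas : Measurable T) (hTint : Integrable T P)
    (hTbd : ∀ᵐ ω ∂P, T ω ≤ τ)
    (lam : ℝ → ℝ)
    (hlam : ∀ c, lam c = ∫ ω, Real.log (1 - c * (T ω - μ) / (τ - μ)) ∂P) :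
    (∀ c ∈ Set.Ico (0 : ℝ) 1,
        Integrable (fun ω => Real.log (1 - c * (T ω - μ) / (τ - μ))) P) ∧
      lam 0 = 0 ∧
      ConcaveOn ℝ (Set.Ioo 0 1) lam ∧
      ContinuousOn lam (Set.Ico 0 1) ∧
      (P {ω | T ω = μ} < 1 → StrictConcaveOn ℝ (Set.Ioo 0 1) lam) := by
  have hd : 0 < τ - μ := by linarith
  obtain ⟨X, hX⟩ : ∃ X : Ω → ℝ, X = fun ω => (T ω - μ) / (τ - μ) := ⟨_, rfl⟩
  have hXm : Measurable X := by rw [hX]; fun_prop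
  have hXi : Integrable X P := by
    rw [hX]; exact (hTint.sub (integrable_const μ)).div_const _
  have hX1 : ∀ᵐ ω ∂P, X ω ≤ 1 := by
    filter_upwards [hTbd] with ω h
    rw [hX]
    exact (div_le_one hd).2 (by linarith)
  have hXe : ∀ c ω, c * (T ω - μ) / (τ - μ) = c * X ω := by
    intro c ω; rw [hX, mul_div_assoc]
  simp only [hXe] at hlam ⊢
  have hm : ∀ c : ℝ, Measurable fun ω => Real.log (1 - c * X ω) := fun c =>
    Real.measurable_log.comp ((hXm.const_mul c).const_sub 1)
  have hI : ∀ c ∈ Set.Ico (0 : ℝ) 1, Integrable (fun ω => Real.log (1 - c * X ω)) P := by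
    intro c hc
    refine (hXi.abs.add (integrable_const (-Real.log (1 - c)))).mono'
      (hm c).aestronglyMeasurable ?_
    filter_upwards [hX1] with ω h
    exact aux_bound hc.1 le_rfl hc.2 h
  have hsub : ∀ {c : ℝ}, c ∈ Set.Ioo (0 : ℝ) 1 → c ∈ Set.Ico (0 : ℝ) 1 :=
    fun h => ⟨h.1.le, h.2⟩
  refine ⟨hI, by simp [hlam], ⟨convex_Ioo 0 1, ?_⟩, ?_, fun hP => ⟨convex_Ioo 0 1, ?_⟩⟩
  · intro p hp q hq a b ha hb hab
    have hr := convex_Ioo (0 : ℝ) 1 hp hq ha hb hab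
    simp only [smul_eq_mul] at hr ⊢
    rw [hlam, hlam, hlam, ← integral_const_mul, ← integral_const_mul,
      ← integral_add ((hI p (hsub hp)).const_mul a) ((hI q (hsub hq)).const_mul b)]
    refine integral_mono_ae (((hI p (hsub hp)).const_mul a).add ((hI q (hsub hq)).const_mul b))
      (hI _ (hsub hr)) ?_
    filter_upwards [hX1] with ω h
    exact aux_concave hp hq ha hb hab h
  · intro c hc
    have hl : lam = fun c => ∫ ω, Real.log (1 - c * X ω) ∂P := funext hlam
    rw [hl]
    obtain ⟨d, hcd, hd1⟩ := exists_between hc.2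
    refine continuousWithinAt_of_dominated (bound := fun ω => |X ω| + -Real.log (1 - d))
      (Eventually.of_forall fun c => (hm c).aestronglyMeasurable) ?_
      (hXi.abs.add (integrable_const _)) ?_
    · filter_upwards [self_mem_nhdsWithin, mem_nhdsWithin_of_mem_nhds (Iio_mem_nhds hcd)]
        with e he hed
      filter_upwards [hX1] with ω h
      exact aux_bound he.1 (le_of_lt hed) hd1 h
    · filter_upwards [hX1] with ω h
      have : 0 < 1 - c * X ω := by nlinarith [hc.1, hc.2]
      have hc1 : ContinuousAt (fun x : ℝ => 1 - x * X ω) c := by fun_prop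
      exact (hc1.log this.ne').continuousWithinAt
  · intro p hp q hq hpq a b ha hb hab
    have hr := convex_Ioo (0 : ℝ) 1 hp hq ha.le hb.le hab
    simp only [smul_eq_mul] at hr ⊢
    have i1 := ((hI p (hsub hp)).const_mul a).add ((hI q (hsub hq)).const_mul b)
    have i2 := hI _ (hsub hr)
    rw [hlam, hlam, hlam, ← integral_const_mul, ← integral_const_mul,
      ← integral_add ((hI p (hsub hp)).const_mul a) ((hI q (hsub hq)).const_mul b)]
    have hle : (fun ω => a * Real.log (1 - p * X ω) + b * Real.log (1 - q * X ω)) ≤ᵐ[P]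
        fun ω => Real.log (1 - (a * p + b * q) * X ω) := by
      filter_upwards [hX1] with ω h
      exact aux_concave hp hq ha.le hb.le hab h
    refine lt_of_le_of_ne (integral_mono_ae i1 i2 hle) fun heq => hP.ne ?_
    have hae := (integral_eq_iff_of_ae_le i1 i2 hle).1 heq
    have hT : ∀ᵐ ω ∂P, T ω = μ := by
      filter_upwards [hX1, hae] with ω h h'
      by_contra hne
      refine (aux_strict hp hq hpq ha hb hab h ?_).ne h'
      rw [hX]
      exact div_ne_zero (sub_ne_zero.2 hne) hd.ne'
    exact (measure_congr (eventuallyEq_univ.2 hT)).trans measure_univ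
end

section
/- Let τ0 ≤ T ≤ τ1 almost surely with τ0 < ν < μ < τ1 and E(T) = ν, and set λ(c) = E[log(1 − c·(T − μ)/(τ1 − μ))], p = (ν − τ0)/(τ1 − τ0), q = (μ − τ0)/(τ1 − τ0). Then λ((μ − ν)/(μ − τ0)) ≥ p·log(p/q) + (1 − p)·log((1 − p)/(1 − q)) > 0; that is, λ evaluated at (μ − ν)/(μ − τ0) is at least the Kullback–Leibler divergence D_KL(Alt(p) ∥ Alt(q)), which is strictly positive. -/
open MeasureTheory ProbabilityTheory Filter

/-- part of Lemma 4: if `τ0 ≤ T ≤ τ1` a.s., `τ0 < ν < μ < τ1` and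
`E(T) = ν`, then `λ((μ − ν)/(μ − τ0))` is at least the Kullback–Leibler divergence
`D_KL(Alt(p) ∥ Alt(q)) = p·log(p/q) + (1 − p)·log((1 − p)/(1 − q))` with
`p = (ν − τ0)/(τ1 − τ0)` and `q = (μ − τ0)/(τ1 − τ0)`, which is strictly positive. -/
theorem stmt10 {Ω : Type*} [MeasurableSpace Ω] (P : Measure Ω) [IsProbabilityMeasure P]
    (τ0 τ1 ν μ : ℝ) (h0ν : τ0 < ν) (hνμ : ν < μ) (hμ1 : μ < τ1)
    (T : Ω → ℝ) (hTint : Integrable T P) (hTbd : ∀ᵐ ω ∂P, T ω ∈ Set.Icc τ0 τ1)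
    (hTmean : ∫ ω, T ω ∂P = ν)
    (p q : ℝ) (hp : p = (ν - τ0) / (τ1 - τ0)) (hq : q = (μ - τ0) / (τ1 - τ0)) :
    0 < p * Real.log (p / q) + (1 - p) * Real.log ((1 - p) / (1 - q)) ∧
      p * Real.log (p / q) + (1 - p) * Real.log ((1 - p) / (1 - q)) ≤
        ∫ ω, Real.log (1 - (μ - ν) / (μ - τ0) * (T ω - μ) / (τ1 - μ)) ∂P := by
  have hd : 0 < τ1 - τ0 := by linarith
  have hμ0 : 0 < μ - τ0 := by linarith
  have h1μ : 0 < τ1 - μ := by linarith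
  have hp0 : 0 < p := by rw [hp]; exact div_pos (by linarith) hd
  have hpq : p < q := by rw [hp, hq]; exact div_lt_div_of_pos_right (by linarith) hd
  have hq1 : q < 1 := by rw [hq, div_lt_one hd]; linarith
  have hq0 : 0 < q := hp0.trans hpq
  have h1q : 0 < 1 - q := by linarith
  have h1p : 0 < 1 - p := by linarith
  have hA : 0 < p / q := div_pos hp0 hq0
  have hA1 : p / q < 1 := by rw [div_lt_one hq0]; exact hpq
  have hB1 : 1 < (1 - p) / (1 - q) := by rw [one_lt_div h1q]; linarith
  have hB : 0 < (1 - p) / (1 - q) := by linarith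
  constructor
  · have e1 : Real.log (p / q) = - Real.log (q / p) := by rw [← Real.log_inv, inv_div]
    have e2 : Real.log ((1 - p) / (1 - q)) = - Real.log ((1 - q) / (1 - p)) := by
      rw [← Real.log_inv, inv_div]
    have l1 : Real.log (q / p) < q / p - 1 :=
      Real.log_lt_sub_one_of_pos (div_pos hq0 hp0) (by rw [Ne, div_eq_one_iff_eq hp0.ne']; exact hpq.ne')
    have l2 : Real.log ((1 - q) / (1 - p)) ≤ (1 - q) / (1 - p) - 1 :=
      Real.log_le_sub_one_of_pos (div_pos h1q h1p)
    have m1 := mul_lt_mul_of_pos_left l1 hp0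
    have m2 := mul_le_mul_of_nonneg_left l2 h1p.le
    have k1 : p * (q / p - 1) = q - p := by field_simp
    have k2 : (1 - p) * ((1 - q) / (1 - p) - 1) = p - q := by field_simp; ring
    rw [e1, e2]
    linarith
  · set A := p / q with hAdef
    set B := (1 - p) / (1 - q) with hBdef
    have hAe : A = (ν - τ0) / (μ - τ0) := by
      rw [hAdef, hp, hq]; field_simp
    have hBe : B = (τ1 - ν) / (τ1 - μ) := by
      have a1 : 1 - p = (τ1 - ν) / (τ1 - τ0) := by rw [hp]; field_simp; ring
      have a2 : 1 - q = (τ1 - μ) / (τ1 - τ0) := by rw [hq]; field_simp; ring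
      rw [hBdef, a1, a2]; field_simp
    have hf : ∀ t : ℝ, 1 - (μ - ν) / (μ - τ0) * (t - μ) / (τ1 - μ)
        = (t - τ0) / (τ1 - τ0) * A + (1 - (t - τ0) / (τ1 - τ0)) * B := by
      intro t
      rw [hAe, hBe]; field_simp; ring
    have hs : ∀ᵐ ω ∂P, 0 ≤ (T ω - τ0) / (τ1 - τ0) ∧ (T ω - τ0) / (τ1 - τ0) ≤ 1 := by
      filter_upwards [hTbd] with ω h
      exact ⟨div_nonneg (by linarith [h.1]) hd.le, by rw [div_le_one hd]; linarith [h.2]⟩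
    have hsint : Integrable (fun ω => (T ω - τ0) / (τ1 - τ0)) P :=
      (hTint.sub (integrable_const τ0)).div_const _
    have hsmean : ∫ ω, (T ω - τ0) / (τ1 - τ0) ∂P = p := by
      rw [integral_div, integral_sub hTint (integrable_const τ0), hTmean, hp]; simp
    simp_rw [hf]
    have key : ∫ ω, ((T ω - τ0) / (τ1 - τ0) * (Real.log A - Real.log B) + Real.log B) ∂P
        = p * Real.log A + (1 - p) * Real.log B := by
      rw [integral_add (hsint.mul_const _) (integrable_const _), integral_mul_const, hsmean]
      simp; ring
    rw [← key]
    refine integral_mono_ae ((hsint.mul_const _).add (integrable_const _)) ?_ ?_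
    · refine Integrable.of_mem_Icc (Real.log A) (Real.log B) ?_ ?_
      · have := hsint.aemeasurable
        exact Real.measurable_log.comp_aemeasurable
          ((this.mul_const A).add ((this.const_sub 1).mul_const B))
      · filter_upwards [hs] with ω h
        have g1 := mul_nonneg h.1 (by linarith : 0 ≤ B - A)
        have g2 := mul_nonneg (sub_nonneg.2 h.2) (by linarith : 0 ≤ B - A)
        exact ⟨Real.log_le_log hA (by linarith), Real.log_le_log (by linarith) (by linarith)⟩
    · filter_upwards [hs] with ω h
      have := strictConcaveOn_log_Ioi.concaveOn.2 (Set.mem_Ioi.2 hA) (Set.mem_Ioi.2 hB) h.1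
        (sub_nonneg.2 h.2) (by ring)
      simp only [smul_eq_mul] at this
      linarith
end

section
/- Let τ0 ≤ T ≤ τ1 almost surely with τ0 < ν < μ < τ1 and E(T) = ν, and set Z = (T − μ)/(τ1 − μ) and c0 = (μ − ν)/(μ − τ0). Then E[−Z/(1 − c0·Z)] ≥ 0; that is, the derivative of λ(c) = E[log(1 − c·Z)] at c = c0 is nonnegative. Consequently the concave function λ attains its maximum over [0,1] at some point c_opt with (μ − ν)/(μ − τ0) ≤ c_opt ≤ 1. -/
open MeasureTheory ProbabilityTheory Filter

lemma core_ptwise (a c0 z : ℝ) (ha : 0 < a) (h0 : 0 < c0) (h1 : c0 < 1)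
    (hz : z ∈ Set.Icc (-a) 1) :
    -(z + c0 * a) / ((1 + c0 * a) * (1 - c0)) ≤ -z / (1 - c0 * z) := by
  obtain ⟨hz1, hz2⟩ := hz
  have hp : 0 < 1 - c0 * z := by nlinarith
  have hq : 0 < (1 + c0 * a) * (1 - c0) := by
    have : 0 < c0 * a := by positivity
    apply mul_pos <;> linarith
  rw [div_le_div_iff₀ hq hp]
  have : 0 ≤ c0 * ((z + a) * (1 - z)) :=
    mul_nonneg h0.le (mul_nonneg (by linarith) (by linarith))
  nlinarith

lemma core_bounds (a d c z : ℝ) (ha : 0 < a) (hc : c ∈ Set.Icc 0 d) (hd : d < 1)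
    (hz : z ∈ Set.Icc (-a) 1) : 1 - d ≤ 1 - c * z ∧ 1 - c * z ≤ 1 + a := by
  obtain ⟨hz1, hz2⟩ := hz
  obtain ⟨hc1, hc2⟩ := hc
  constructor <;> nlinarith

lemma core_log (a d c z : ℝ) (ha : 0 < a) (hc : c ∈ Set.Icc 0 d) (hd : d < 1)
    (hz : z ∈ Set.Icc (-a) 1) :
    ‖Real.log (1 - c * z)‖ ≤ max |Real.log (1 - d)| |Real.log (1 + a)| := by
  obtain ⟨h1, h2⟩ := core_bounds a d c z ha hc hd hz
  have h3 : 0 < 1 - d := by linarith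
  rw [Real.norm_eq_abs]
  exact abs_le_max_abs_abs (Real.log_le_log h3 h1) (Real.log_le_log (by linarith) h2)

lemma core {Ω : Type*} [MeasurableSpace Ω] (P : Measure Ω) [IsProbabilityMeasure P]
    (Z : Ω → ℝ) (a c0 : ℝ) (ha : 0 < a) (h0 : 0 < c0) (h1 : c0 < 1)
    (hZi : Integrable Z P) (hZb : ∀ᵐ ω ∂P, Z ω ∈ Set.Icc (-a) 1)
    (hm : ∫ ω, Z ω ∂P = - (c0 * a))
    (lam : ℝ → ℝ) (hlam : ∀ c, lam c = ∫ ω, Real.log (1 - c * Z ω) ∂P) :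
    0 ≤ ∫ ω, -Z ω / (1 - c0 * Z ω) ∂P ∧
      ∃ copt ∈ Set.Icc c0 1, ∀ c ∈ Set.Icc (0 : ℝ) 1, lam c ≤ lam copt := by
  have hZm := hZi.aemeasurable
  have hfi : Integrable (fun ω => -Z ω / (1 - c0 * Z ω)) P := by
    refine Integrable.of_bound (C := (a + 1) / (1 - c0)) ?_ ?_
    · exact (AEMeasurable.div hZm.neg ((hZm.const_mul c0).const_sub 1)).aestronglyMeasurable
    · filter_upwards [hZb] with ω hω
      obtain ⟨h3, h4⟩ := core_bounds a c0 c0 (Z ω) ha ⟨h0.le, le_rfl⟩ h1 hω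
      rw [norm_div, norm_neg, Real.norm_eq_abs, Real.norm_eq_abs,
        abs_of_pos (show 0 < 1 - c0 * Z ω by linarith)]
      have : |Z ω| ≤ a + 1 := abs_le.2 ⟨by linarith [hω.1], by linarith [hω.2]⟩
      exact div_le_div₀ (by linarith) this (by linarith) h3
  have hpos : 0 ≤ ∫ ω, -Z ω / (1 - c0 * Z ω) ∂P := by
    have hle : ∫ ω, -(Z ω + c0 * a) / ((1 + c0 * a) * (1 - c0)) ∂P
        ≤ ∫ ω, -Z ω / (1 - c0 * Z ω) ∂P := by
      apply integral_mono_ae _ hfi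
      · filter_upwards [hZb] with ω hω using core_ptwise a c0 (Z ω) ha h0 h1 hω
      · exact ((hZi.add (integrable_const _)).neg).div_const _
    have heq : ∫ ω, -(Z ω + c0 * a) / ((1 + c0 * a) * (1 - c0)) ∂P = 0 := by
      rw [integral_div, integral_neg, integral_add hZi (integrable_const _), hm]
      simp
    linarith
  refine ⟨hpos, ?_⟩
  have hmeas : ∀ c, AEStronglyMeasurable (fun ω => Real.log (1 - c * Z ω)) P := fun c =>
    (((hZm.const_mul c).const_sub 1).log).aestronglyMeasurable
  have hint : ∀ c, 0 ≤ c → c < 1 → Integrable (fun ω => Real.log (1 - c * Z ω)) P := by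
    intro c hc hc1
    refine Integrable.of_bound (hmeas c) (max |Real.log (1 - c)| |Real.log (1 + a)|) ?_
    filter_upwards [hZb] with ω hω using core_log a c c (Z ω) ha ⟨hc, le_rfl⟩ hc1 hω
  have hcont : ∀ d, d < 1 → ContinuousOn lam (Set.Icc c0 d) := by
    intro d hd
    have : lam = fun c => ∫ ω, Real.log (1 - c * Z ω) ∂P := funext hlam
    rw [this]
    refine continuousOn_of_dominated
      (bound := fun _ => max |Real.log (1 - d)| |Real.log (1 + a)|)
      (fun c _ => hmeas c) ?_ (integrable_const _) ?_
    · intro c hc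
      filter_upwards [hZb] with ω hω using
        core_log a d c (Z ω) ha ⟨h0.le.trans hc.1, hc.2⟩ hd hω
    · filter_upwards [hZb] with ω hω
      apply ContinuousOn.log (by fun_prop)
      intro c hc
      have := (core_bounds a d c (Z ω) ha ⟨h0.le.trans hc.1, hc.2⟩ hd hω).1
      linarith
  have hleft : ∀ c, 0 ≤ c → c ≤ c0 → lam c ≤ lam c0 := by
    intro c hc hcc
    have hle : ∫ ω, Real.log (1 - c * Z ω) ∂P ≤
        ∫ ω, (Real.log (1 - c0 * Z ω) + (c - c0) * (-Z ω / (1 - c0 * Z ω))) ∂P := by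
      apply integral_mono_ae (hint c hc (by linarith))
        ((hint c0 h0.le h1).add (hfi.const_mul _))
      filter_upwards [hZb] with ω hω
      have e1 := (core_bounds a c0 c0 (Z ω) ha ⟨h0.le, le_rfl⟩ h1 hω).1
      have e2 := (core_bounds a c0 c (Z ω) ha ⟨hc, hcc⟩ h1 hω).1
      have p1 : 0 < 1 - c0 * Z ω := by linarith
      have p2 : 0 < 1 - c * Z ω := by linarith
      have := Real.log_le_sub_one_of_pos (div_pos p2 p1)
      rw [Real.log_div p2.ne' p1.ne'] at this
      have e3 : (1 - c * Z ω) / (1 - c0 * Z ω) - 1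
          = (c - c0) * (-Z ω / (1 - c0 * Z ω)) := by
        rw [div_sub_one p1.ne', ← mul_div_assoc]
        congr 1
        ring
      simp only [Pi.add_apply]
      linarith
    rw [integral_add (hint c0 h0.le h1) (hfi.const_mul _), integral_const_mul,
      ← hlam, ← hlam] at hle
    nlinarith
  by_cases hatt : ∃ m ∈ Set.Ico c0 1, ∀ c ∈ Set.Ico c0 1, lam c ≤ lam m
  · obtain ⟨m, hm, hmax⟩ := hatt
    have hmax' : ∀ c, 0 ≤ c → c < 1 → lam c ≤ lam m := by
      intro c hc hc1
      rcases le_total c c0 with h | h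
      · exact (hleft c hc h).trans (hmax c0 ⟨le_rfl, h1⟩)
      · exact hmax c ⟨h, hc1⟩
    rcases le_total (lam 1) (lam m) with h | h
    · refine ⟨m, ⟨hm.1, hm.2.le⟩, fun c hc => ?_⟩
      rcases hc.2.eq_or_lt with rfl | h2
      · exact h
      · exact hmax' c hc.1 h2
    · refine ⟨1, ⟨h1.le, le_rfl⟩, fun c hc => ?_⟩
      rcases hc.2.eq_or_lt with rfl | h2
      · exact le_rfl
      · exact (hmax' c hc.1 h2).trans h
  · push Not at hatt
    have key : ∀ s ∈ Set.Ico c0 1, lam s ≤ lam 1 := by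
      intro s hs
      have hfreq : ∀ d, d < 1 → ∃ c ∈ Set.Ico c0 1, d < c ∧ lam s ≤ lam c := by
        intro d hd
        set e := max d s with he
        have he1 : e < 1 := max_lt hd hs.2
        have hse : s ≤ e := le_max_right _ _
        obtain ⟨m, hm, hmm⟩ := isCompact_Icc.exists_isMaxOn
          (⟨s, hs.1, hse⟩ : (Set.Icc c0 e).Nonempty) (hcont e he1)
        obtain ⟨c, hc, hlt⟩ := hatt m ⟨hm.1, hm.2.trans_lt he1⟩
        refine ⟨c, hc, ?_, ?_⟩
        · by_contra! hcd
          have : lam c ≤ lam m := hmm ⟨hc.1, hcd.trans (le_max_left _ _)⟩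
          linarith
        · have : lam s ≤ lam m := hmm ⟨hs.1, hse⟩
          linarith
      have hd : ∀ n : ℕ, (1 - 1 / ((n : ℝ) + 1)) < 1 := fun n => by
        have : 0 < 1 / ((n : ℝ) + 1) := by positivity
        linarith
      choose u hu1 hu2 hu3 using fun n : ℕ => hfreq _ (hd n)
      have hut : Tendsto u atTop (nhds 1) := by
        refine tendsto_of_tendsto_of_tendsto_of_le_of_le (g := fun n : ℕ => 1 - 1 / ((n : ℝ) + 1))
          (h := fun _ => 1) ?_ tendsto_const_nhds (fun n => (hu2 n).le) (fun n => (hu1 n).2.le)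
        simpa using (tendsto_one_div_add_atTop_nhds_zero_nat (𝕜 := ℝ)).const_sub 1
      set K := Real.log (1 + a) with hK
      have hnn : ∀ n, ∀ᵐ ω ∂P, 0 ≤ K - Real.log (1 - u n * Z ω) := by
        intro n
        filter_upwards [hZb] with ω hω
        have := core_bounds a (u n) (u n) (Z ω) ha ⟨h0.le.trans (hu1 n).1, le_rfl⟩ (hu1 n).2 hω
        have := Real.log_le_log (by linarith [(hu1 n).2]) this.2
        linarith
      have hui : ∀ n, Integrable (fun ω => Real.log (1 - u n * Z ω)) P := fun n =>
        hint _ (h0.le.trans (hu1 n).1) (hu1 n).2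
      have hval : ∀ n, ∫⁻ ω, ENNReal.ofReal (K - Real.log (1 - u n * Z ω)) ∂P
          ≤ ENNReal.ofReal (K - lam s) := by
        intro n
        have hKi : Integrable (fun ω => K - Real.log (1 - u n * Z ω)) P :=
          (integrable_const K).sub (hui n)
        rw [← ofReal_integral_eq_lintegral_ofReal hKi (hnn n)]
        apply ENNReal.ofReal_le_ofReal
        rw [integral_sub (integrable_const K) (hui n), ← hlam]
        simp
        linarith [hu3 n]
      have hfat : ∫⁻ ω, liminf (fun n => ENNReal.ofReal (K - Real.log (1 - u n * Z ω))) atTop ∂P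
          ≤ ENNReal.ofReal (K - lam s) := by
        refine (lintegral_liminf_le' (fun n => ?_)).trans ?_
        · exact ((hmeas (u n)).aemeasurable.const_sub K).ennreal_ofReal
        · exact (liminf_le_liminf (Eventually.of_forall hval)).trans (by simp)
      have hlm : AEMeasurable
          (fun ω => liminf (fun n => ENNReal.ofReal (K - Real.log (1 - u n * Z ω))) atTop) P :=
        ⟨fun ω => liminf (fun n => ENNReal.ofReal (K - Real.log (1 - u n * hZm.mk Z ω))) atTop,
          Measurable.liminf fun n => by
            have := hZm.measurable_mk
            fun_prop,
          by filter_upwards [hZm.ae_eq_mk] with ω hω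
             rw [hω]⟩
      have hfin := ae_lt_top' hlm (hfat.trans_lt ENNReal.ofReal_lt_top).ne
      have hne : ∀ᵐ ω ∂P, Z ω < 1 := by
        filter_upwards [hZb, hfin] with ω hω hf
        refine lt_of_le_of_ne hω.2 fun h => ?_
        have ht : Tendsto (fun n => ENNReal.ofReal (K - Real.log (1 - u n * Z ω))) atTop
            (nhds ⊤) := by
          apply ENNReal.tendsto_ofReal_atTop.comp
          apply tendsto_atTop_add_const_left
          apply tendsto_neg_atBot_atTop.comp
          apply Real.tendsto_log_nhdsGT_zero.comp
          rw [tendsto_nhdsWithin_iff]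
          constructor
          · simpa [h] using hut.const_sub 1
          · refine Eventually.of_forall fun n => ?_
            have := (hu1 n).2
            simp [h, this]
        rw [ht.liminf_eq] at hf
        exact lt_irrefl _ hf
      have hlim : ∫⁻ ω, ENNReal.ofReal (K - Real.log (1 - 1 * Z ω)) ∂P
          ≤ ENNReal.ofReal (K - lam s) := by
        refine le_trans (le_of_eq (lintegral_congr_ae ?_)) hfat
        filter_upwards [hne] with ω hω
        refine (Tendsto.liminf_eq ?_).symm
        apply ENNReal.tendsto_ofReal
        apply Tendsto.const_sub
        apply Tendsto.log
        · exact (hut.mul_const _).const_sub 1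
        · linarith
      have hnn1 : ∀ᵐ ω ∂P, 0 ≤ K - Real.log (1 - 1 * Z ω) := by
        filter_upwards [hZb, hne] with ω hω h
        have := Real.log_le_log (show 0 < 1 - 1 * Z ω by linarith)
          (show 1 - 1 * Z ω ≤ 1 + a by linarith [hω.1])
        linarith
      have hi1' : Integrable (fun ω => K - Real.log (1 - 1 * Z ω)) P := by
        refine ⟨aestronglyMeasurable_const.sub (hmeas 1), ?_⟩
        rw [hasFiniteIntegral_iff_ofReal hnn1]
        exact hlim.trans_lt ENNReal.ofReal_lt_top
      have hi1 : Integrable (fun ω => Real.log (1 - 1 * Z ω)) P := by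
        have := (integrable_const K).sub hi1'
        refine this.congr (Eventually.of_forall fun ω => ?_)
        simp
      have hKs : 0 ≤ K - lam s := by
        rw [hlam s]
        have hle : ∫ ω, Real.log (1 - s * Z ω) ∂P ≤ ∫ _, K ∂P := by
          apply integral_mono_ae (hint s (h0.le.trans hs.1) hs.2) (integrable_const K)
          filter_upwards [hZb] with ω hω
          have := core_bounds a s s (Z ω) ha ⟨h0.le.trans hs.1, le_rfl⟩ hs.2 hω
          exact Real.log_le_log (by linarith [hs.2]) this.2
        simp at hle
        linarith
      rw [← ofReal_integral_eq_lintegral_ofReal hi1' hnn1,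
        ENNReal.ofReal_le_ofReal_iff hKs, integral_sub (integrable_const K) hi1, ← hlam] at hlim
      simp at hlim
      linarith
    refine ⟨1, ⟨h1.le, le_rfl⟩, fun c hc => ?_⟩
    rcases hc.2.eq_or_lt with rfl | h2
    · exact le_rfl
    rcases le_total c c0 with h | h
    · exact (hleft c hc.1 h).trans (key c0 ⟨le_rfl, h1⟩)
    · exact key c ⟨h, h2⟩

/-- part of Lemma 4: with `Z = (T − μ)/(τ1 − μ)` and
`c0 = (μ − ν)/(μ − τ0)`, the derivative of `λ` at `c0` is nonnegative,
`E[−Z/(1 − c0·Z)] ≥ 0`, and consequently `λ(c) = E[log(1 − c·Z)]` attains its maximum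
over `[0,1]` at some point `c_opt` with `c0 ≤ c_opt ≤ 1`. -/
theorem stmt11 {Ω : Type*} [MeasurableSpace Ω] (P : Measure Ω) [IsProbabilityMeasure P]
    (τ0 τ1 ν μ : ℝ) (h0ν : τ0 < ν) (hνμ : ν < μ) (hμ1 : μ < τ1)
    (T : Ω → ℝ) (hTint : Integrable T P) (hTbd : ∀ᵐ ω ∂P, T ω ∈ Set.Icc τ0 τ1)
    (hTmean : ∫ ω, T ω ∂P = ν)
    (Z : Ω → ℝ) (hZ : ∀ ω, Z ω = (T ω - μ) / (τ1 - μ))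
    (c0 : ℝ) (hc0 : c0 = (μ - ν) / (μ - τ0))
    (lam : ℝ → ℝ) (hlam : ∀ c, lam c = ∫ ω, Real.log (1 - c * Z ω) ∂P) :
    0 ≤ ∫ ω, -Z ω / (1 - c0 * Z ω) ∂P ∧
      ∃ copt ∈ Set.Icc c0 1, ∀ c ∈ Set.Icc (0 : ℝ) 1, lam c ≤ lam copt := by
  have hd : 0 < τ1 - μ := by linarith
  have hd0 : 0 < μ - τ0 := by linarith
  have hZe : Z = fun ω => (T ω - μ) / (τ1 - μ) := funext hZ
  refine core P Z ((μ - τ0) / (τ1 - μ)) c0 (by positivity) ?_ ?_ ?_ ?_ ?_ lam hlam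
  · rw [hc0]
    exact div_pos (by linarith) hd0
  · rw [hc0, div_lt_one hd0]
    linarith
  · rw [hZe]
    exact (hTint.sub (integrable_const μ)).div_const _
  · filter_upwards [hTbd] with ω hω
    rw [hZ]
    constructor
    · rw [← neg_div]
      exact div_le_div_of_nonneg_right (by linarith [hω.1]) hd.le
    · rw [div_le_one hd]
      linarith [hω.2]
  · rw [hZe, integral_div, integral_sub hTint (integrable_const μ), hTmean, hc0]
    simp
    field_simp
    ring
end

section
/- Let τ0 ≤ T ≤ τ1 almost surely with τ0 < μ < τ1, and suppose P{T = τ1} > 0. Then λ(c) = E[log(1 − c·(T − μ)/(τ1 − μ))] satisfies lim_{c↑1} λ(c) = −∞; indeed λ(c) ≤ P{T = τ1}·log(1 − c) + log(1 − (τ0 − μ)/(τ1 − μ)) for 0 ≤ c < 1. -/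
open MeasureTheory ProbabilityTheory Filter

/-- part of Lemma 4: if `τ0 ≤ T ≤ τ1` a.s., `τ0 < μ < τ1` and
`P{T = τ1} > 0`, then `λ(c) ≤ P{T = τ1}·log(1 − c) + log(1 − (τ0 − μ)/(τ1 − μ))` for
`0 ≤ c < 1`, and `λ(c) → −∞` as `c ↑ 1`. -/
theorem stmt12 {Ω : Type*} [MeasurableSpace Ω] (P : Measure Ω) [IsProbabilityMeasure P]
    (τ0 τ1 μ : ℝ) (h0μ : τ0 < μ) (hμ1 : μ < τ1)
    (T : Ω → ℝ) (hTmeas : Measurable T) (hTint : Integrable T P)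
    (hTbd : ∀ᵐ ω ∂P, T ω ∈ Set.Icc τ0 τ1)
    (hpos : 0 < P {ω | T ω = τ1})
    (lam : ℝ → ℝ)
    (hlam : ∀ c, lam c = ∫ ω, Real.log (1 - c * (T ω - μ) / (τ1 - μ)) ∂P) :
    (∀ c, 0 ≤ c → c < 1 →
        lam c ≤ (P {ω | T ω = τ1}).toReal * Real.log (1 - c) +
          Real.log (1 - (τ0 - μ) / (τ1 - μ))) ∧
      Tendsto lam (nhdsWithin 1 (Set.Iio 1)) atBot := by
  have hd : 0 < τ1 - μ := sub_pos.2 hμ1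
  have hx0 : (τ0 - μ) / (τ1 - μ) < 0 := div_neg_of_neg_of_pos (by linarith) hd
  have hK : 0 ≤ Real.log (1 - (τ0 - μ) / (τ1 - μ)) := Real.log_nonneg (by linarith)
  have hS : MeasurableSet {ω | T ω = τ1} := hTmeas (measurableSet_singleton τ1)
  have key : ∀ c, 0 ≤ c → c < 1 →
        lam c ≤ (P {ω | T ω = τ1}).toReal * Real.log (1 - c) +
          Real.log (1 - (τ0 - μ) / (τ1 - μ)) := by
    intro c hc0 hc1
    have hb : ∀ᵐ ω ∂P, 1 - c ≤ 1 - c * (T ω - μ) / (τ1 - μ) ∧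
        1 - c * (T ω - μ) / (τ1 - μ) ≤ 1 - (τ0 - μ) / (τ1 - μ) := by
      filter_upwards [hTbd] with ω hω
      have h1 : (T ω - μ) / (τ1 - μ) ≤ 1 := by
        rw [div_le_one hd]; linarith [hω.2]
      have h2 : (τ0 - μ) / (τ1 - μ) ≤ (T ω - μ) / (τ1 - μ) := by
        apply div_le_div_of_nonneg_right _ hd.le
        linarith [hω.1]
      rw [mul_div_assoc]
      constructor
      · nlinarith
      · nlinarith
    have hint : Integrable (fun ω => Real.log (1 - c * (T ω - μ) / (τ1 - μ))) P := by
      apply Integrable.of_mem_Icc (Real.log (1 - c)) (Real.log (1 - (τ0 - μ) / (τ1 - μ)))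
      · exact (Real.measurable_log.comp (by fun_prop)).aemeasurable
      · filter_upwards [hb] with ω hω
        exact ⟨Real.log_le_log (by linarith) hω.1, Real.log_le_log (by linarith [hω.1]) hω.2⟩
    have hi1 : Integrable ({ω | T ω = τ1}.indicator (fun _ => Real.log (1 - c))) P :=
      (integrable_const _).indicator hS
    have hi2 : Integrable (fun _ : Ω => Real.log (1 - (τ0 - μ) / (τ1 - μ))) P :=
      integrable_const _
    have e : ∫ ω, ({ω | T ω = τ1}.indicator (fun _ => Real.log (1 - c)) ω +
        Real.log (1 - (τ0 - μ) / (τ1 - μ))) ∂P = (P {ω | T ω = τ1}).toReal * Real.log (1 - c) +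
          Real.log (1 - (τ0 - μ) / (τ1 - μ)) := by
      rw [integral_add hi1 hi2, integral_indicator_const _ hS]
      simp [Measure.real]
    rw [hlam, ← e]
    apply integral_mono_ae hint (hi1.add hi2)
    filter_upwards [hb] with ω hω
    by_cases h : T ω = τ1
    · have : c * (τ1 - μ) / (τ1 - μ) = c := mul_div_cancel_right₀ _ hd.ne'
      simp [Set.indicator, h, this, hK]
    · simp only [Pi.add_apply, Set.indicator, Set.mem_ofPred_eq, h, if_false, zero_add]
      exact Real.log_le_log (by linarith [hω.1]) hω.2
  refine ⟨key, ?_⟩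
  have hp : 0 < (P {ω | T ω = τ1}).toReal := ENNReal.toReal_pos hpos.ne' (measure_ne_top _ _)
  have ht : Tendsto (fun c : ℝ => 1 - c) (nhdsWithin 1 (Set.Iio 1))
      (nhdsWithin 0 (Set.Ioi 0)) := by
    apply tendsto_nhdsWithin_of_tendsto_nhds_of_eventually_within
    · have : Tendsto (fun c : ℝ => 1 - c) (nhds 1) (nhds (1 - 1)) :=
        (continuous_const.sub continuous_id).tendsto 1
      rw [sub_self] at this
      exact this.mono_left nhdsWithin_le_nhds
    · filter_upwards [self_mem_nhdsWithin] with c hc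
      exact Set.mem_Ioi.2 (sub_pos.2 (Set.mem_Iio.1 hc))
  have hl := tendsto_atBot_add_const_right _ (Real.log (1 - (τ0 - μ) / (τ1 - μ)))
    ((Real.tendsto_log_nhdsGT_zero.comp ht).const_mul_atBot hp)
  refine tendsto_atBot_mono' _ ?_ hl
  have h0 : ∀ᶠ c : ℝ in nhdsWithin 1 (Set.Iio 1), 0 < c :=
    nhdsWithin_le_nhds (lt_mem_nhds one_pos)
  filter_upwards [self_mem_nhdsWithin, h0] with c hc hc0
  exact key c hc0.le (Set.mem_Iio.1 hc)
end

section
/- Let T be an integrable random variable with T ≤ τ1 almost surely and p = E(T) < τ1, let {𝓕_k}_{k=0}^∞ be a filtration, let 0 < α < 1, and suppose that for each μ < τ1 a process {M_k^μ}_{k=0}^∞ adapted to {𝓕_k} is given such that: (i) for every k and every sample point, the map μ ↦ M_k^μ is continuous and increasing; and (ii) the process {M_k^p}_k (at μ = p = E(T)) is a positive supermartingale with E(M_0^p) ≤ 1. Define, for each k, the random variable U_k^r = inf{μ : M_k^μ ≥ 1/α} (with U_k^r = ∞ if M_k^μ < 1/α for all μ). Then P{∀ k : E(T) < U_k^r}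 ≥ 1 − α; that is, each U_k^r is a (1 − α)-confidence upper bound for E(T), simultaneously over all k. -/
open MeasureTheory ProbabilityTheory Filter

theorem ville_aux {Ω : Type*} {m0 : MeasurableSpace Ω} (P : Measure Ω) [IsProbabilityMeasure P]
    (ℱ : Filtration ℕ m0) (c : ℝ) (X : ℕ → Ω → ℝ)
    (hX : Supermartingale X ℱ P) (hinit : ∫ ω, X 0 ω ∂P ≤ 1) (n : ℕ) :
    c * P.real {ω | ∃ k < n, c ≤ X k ω} + ∫ ω in {ω | ∃ k < n, c ≤ X k ω}ᶜ, X n ω ∂P ≤ 1 := by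
  have hB : ∀ n k, k ≤ n → MeasurableSet[ℱ n] {ω | c ≤ X k ω} := fun n k hk =>
    ((hX.1 k).mono (ℱ.mono hk)).measurable measurableSet_Ici
  have hA : ∀ n m, n ≤ m + 1 → MeasurableSet[ℱ m] {ω | ∃ k < n, c ≤ X k ω} := by
    intro n m hnm
    have : {ω | ∃ k < n, c ≤ X k ω} = ⋃ k, ⋃ (_ : k < n), {ω | c ≤ X k ω} := by
      ext ω; simp
    rw [this]
    refine @MeasurableSet.iUnion _ _ (ℱ m) _ _ fun k => ?_
    refine @MeasurableSet.iUnion _ _ (ℱ m) _ _ fun hk => hB m k (by omega)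
  induction n with
  | zero => simpa using hinit
  | succ n ih =>
    set A := {ω | ∃ k < n, c ≤ X k ω} with hAdef
    set B := {ω | c ≤ X n ω} with hBdef
    have hAm : MeasurableSet A := ℱ.le n _ (hA n n (by omega))
    have hBm : MeasurableSet B := ℱ.le n _ (hB n n le_rfl)
    have hEq : {ω | ∃ k < n + 1, c ≤ X k ω} = A ∪ (Aᶜ ∩ B) := by
      ext ω
      simp only [Set.mem_setOf_eq, Set.mem_union, Set.mem_inter_iff, Set.mem_compl_iff, hAdef, hBdef,
        Nat.lt_succ_iff_lt_or_eq]
      constructor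
      · rintro ⟨k, hk | rfl, h⟩
        · exact Or.inl ⟨k, hk, h⟩
        · by_cases h' : ∃ j < k, c ≤ X j ω
          · exact Or.inl h'
          · exact Or.inr ⟨h', h⟩
      · rintro (⟨k, hk, h⟩ | ⟨_, h⟩)
        · exact ⟨k, Or.inl hk, h⟩
        · exact ⟨n, Or.inr rfl, h⟩
    have h1 := hX.setIntegral_le (Nat.le_succ n) (hA (n+1) n le_rfl).compl
    have hc : {ω | ∃ k < n + 1, c ≤ X k ω}ᶜ = Aᶜ \ B := by
      rw [hEq]; ext ω; simp; tauto
    have hm : P.real {ω | ∃ k < n + 1, c ≤ X k ω} = P.real A + P.real (Aᶜ ∩ B) := by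
      rw [hEq]
      exact measureReal_union (Set.disjoint_left.2 fun ω h h' => h'.1 h) (hAm.compl.inter hBm)
    have h2 := integral_inter_add_sdiff (s := Aᶜ) hBm (hX.integrable n).integrableOn
    have h3 : c * P.real (Aᶜ ∩ B) ≤ ∫ ω in Aᶜ ∩ B, X n ω ∂P :=
      setIntegral_ge_of_const_le_real (hAm.compl.inter hBm) (measure_ne_top _ _)
        (fun ω h => h.2) (hX.integrable n).integrableOn
    rw [hm]
    rw [hc] at h1 ⊢
    simp only [Nat.succ_eq_add_one] at h1
    linarith

/-- Theorem 4, confidence upper bounds: given a suitable family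
`{M_k^μ}_{k,μ<τ1}` of processes adapted to a filtration `𝓕`, nonnegative and integrable,
with `μ ↦ M_k^μ` continuous and monotone increasing on `(−∞, τ1)` pointwise, and such
that at `p = E(T) < τ1` the process `{M_k^p}` is a positive supermartingale with
`E(M_0^p) ≤ 1`, the statistics `U_k^r = inf{μ < τ1 : M_k^μ ≥ 1/α}` (`= +∞` if there is
no such `μ`) satisfy `P{∀ k : E(T) < U_k^r} ≥ 1 − α`. -/
theorem stmt16 {Ω : Type*} {m0 : MeasurableSpace Ω} (P : Measure Ω) [IsProbabilityMeasure P]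
    (ℱ : Filtration ℕ m0)
    (τ1 α : ℝ) (hα0 : 0 < α) (hα1 : α < 1)
    (T : Ω → ℝ) (hTint : Integrable T P) (hTbd : ∀ᵐ ω ∂P, T ω ≤ τ1)
    (p : ℝ) (hp : p = ∫ ω, T ω ∂P) (hpτ : p < τ1)
    (M : ℝ → ℕ → Ω → ℝ)
    (hadapted : ∀ μ < τ1, Adapted ℱ (M μ))
    (hint : ∀ μ < τ1, ∀ k, Integrable (M μ k) P)
    (hnonneg : ∀ μ < τ1, ∀ k, 0 ≤ᵐ[P] M μ k)
    (hmono : ∀ k ω, MonotoneOn (fun μ => M μ k ω) (Set.Iio τ1))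
    (hcont : ∀ k ω, ContinuousOn (fun μ => M μ k ω) (Set.Iio τ1))
    (hsuper : Supermartingale (M p) ℱ P)
    (hinit : ∫ ω, M p 0 ω ∂P ≤ 1)
    (U : ℕ → Ω → EReal)
    (hU : ∀ k ω, U k ω =
      sInf {x : EReal | ∃ μ : ℝ, μ < τ1 ∧ x = (μ : EReal) ∧ 1 / α ≤ M μ k ω}) :
    ENNReal.ofReal (1 - α) ≤ P {ω | ∀ k, (p : EReal) < U k ω} := by
  have hαi : 0 < 1 / α := by positivity
  set A : ℕ → Set Ω := fun n => {ω | ∃ k < n, 1 / α ≤ M p k ω} with hA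
  have hAn : ∀ n, P (A n) ≤ ENNReal.ofReal α := by
    intro n
    have h := ville_aux P ℱ (1 / α) (M p) hsuper hinit n
    have h0 : 0 ≤ ∫ ω in (A n)ᶜ, M p n ω ∂P :=
      integral_nonneg_of_ae (ae_restrict_of_ae (hnonneg p hpτ n))
    have h1 : 1 / α * P.real (A n) ≤ 1 := by
      simp only [hA] at h0 ⊢
      linarith
    have h2 : P.real (A n) ≤ α := by
      rwa [one_div, inv_mul_le_iff₀ hα0, mul_one] at h1
    rw [← ofReal_measureReal (measure_ne_top P (A n))]
    exact ENNReal.ofReal_le_ofReal h2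
  have hmonoA : Monotone A := by
    rintro a b hab ω ⟨k, hk, h⟩
    exact ⟨k, hk.trans_le hab, h⟩
  have hU1 : P (⋃ n, A n) ≤ ENNReal.ofReal α := by
    rw [hmonoA.measure_iUnion]
    exact iSup_le hAn
  have hmeas : MeasurableSet (⋃ n, A n) := by
    have : (⋃ n, A n) = ⋃ k, {ω | 1 / α ≤ M p k ω} := by
      ext ω
      simp only [hA, Set.mem_iUnion, Set.mem_setOf_eq]
      exact ⟨fun ⟨_, k, _, h⟩ => ⟨k, h⟩, fun ⟨k, h⟩ => ⟨k + 1, k, Nat.lt_succ_self k, h⟩⟩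
    rw [this]
    exact MeasurableSet.iUnion fun k => measurableSet_le measurable_const
      (((hsuper.1 k).mono (ℱ.le k)).measurable)
  have hsub : (⋃ n, A n)ᶜ ⊆ {ω | ∀ k, (p : EReal) < U k ω} := by
    intro ω hω k
    have hlt : M p k ω < 1 / α := by
      by_contra! hcon
      exact hω (Set.mem_iUnion.2 ⟨k + 1, k, Nat.lt_succ_self k, hcon⟩)
    have hca : ContinuousAt (fun μ => M μ k ω) p :=
      (hcont k ω).continuousAt (Iio_mem_nhds hpτ)
    have hev : ∀ᶠ μ in nhds p, M μ k ω < 1 / α ∧ μ < τ1 :=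
      (hca.eventually_lt continuousAt_const hlt).and (Iio_mem_nhds hpτ)
    obtain ⟨q, ⟨hq1, hq2⟩, hpq⟩ :=
      ((hev.filter_mono nhdsWithin_le_nhds).and (self_mem_nhdsWithin (s := Set.Ioi p))).exists
    have hpq' : (p : EReal) < (q : EReal) := EReal.coe_lt_coe_iff.2 hpq
    refine hpq'.trans_le ?_
    rw [hU]
    refine le_sInf ?_
    rintro x ⟨μ, hμ, rfl, hM⟩
    rw [EReal.coe_le_coe_iff]
    by_contra! hcon
    have := hmono k ω hμ hq2 hcon.le
    simp only at this
    linarith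
  calc ENNReal.ofReal (1 - α) = 1 - ENNReal.ofReal α := by
        rw [ENNReal.ofReal_sub _ hα0.le, ENNReal.ofReal_one]
    _ ≤ 1 - P (⋃ n, A n) := tsub_le_tsub_left hU1 _
    _ = P (⋃ n, A n)ᶜ := (prob_compl_eq_one_sub hmeas).symm
    _ ≤ _ := measure_mono hsub
end

section
/- Let τ1, μ ∈ ℝ with μ < τ1, let 0 ≤ c < 1, and let t_1, …, t_n be real numbers with t_i ≤ τ1 for each i. If ∏_{i=1}^n (1 − c·(t_i − μ)/(τ1 − μ)) > 1 and c > 0, then the sample mean satisfies (1/n)·Σ_{i=1}^n t_i < μ. In particular, whenever a test martingale value M_n^μ(c) exceeds 1, the sample mean lies strictly below μ. -/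
open Finset

/-- Remark 7: if `μ < τ1`, `0 < c < 1`, `t_i ≤ τ1` for all `i`, and the
test martingale value `M_n^μ(c) = ∏_{i=1}^n (1 − c·(t_i − μ)/(τ1 − μ))` exceeds `1`,
then the sample mean satisfies `(1/n)·Σ t_i < μ`. -/
theorem stmt17 (τ1 μ : ℝ) (hμτ : μ < τ1) (c : ℝ) (hc0 : 0 < c) (hc1 : c < 1)
    (n : ℕ) (t : Fin n → ℝ) (ht : ∀ i, t i ≤ τ1)
    (hM : 1 < ∏ i, (1 - c * (t i - μ) / (τ1 - μ))) :
    (∑ i, t i) / n < μ := by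
  have hd : 0 < τ1 - μ := sub_pos.mpr hμτ
  have hn : 0 < n := by
    rcases Nat.eq_zero_or_pos n with h | h
    · subst h
      simp at hM
    · exact h
  have hn' : (0 : ℝ) < n := by exact_mod_cast hn
  have hle : ∏ i, (1 - c * (t i - μ) / (τ1 - μ)) ≤
      ∏ i, Real.exp (-(c * (t i - μ) / (τ1 - μ))) := by
    apply Finset.prod_le_prod
    · intro i _
      have h1 : c * (t i - μ) / (τ1 - μ) ≤ 1 := by
        rw [div_le_one hd]
        nlinarith [mul_nonneg hc0.le (sub_nonneg.mpr (ht i))]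
      linarith
    · intro i _
      have := Real.add_one_le_exp (-(c * (t i - μ) / (τ1 - μ)))
      linarith
  rw [← Real.exp_sum] at hle
  have hpos : 0 < ∑ i, -(c * (t i - μ) / (τ1 - μ)) :=
    Real.one_lt_exp_iff.mp (lt_of_lt_of_le hM hle)
  have heq : ∑ i, -(c * (t i - μ) / (τ1 - μ)) = c / (τ1 - μ) * (n * μ - ∑ i, t i) := by
    have h2 : (n * μ - ∑ i, t i) = ∑ i, (μ - t i) := by
      simp [Finset.sum_sub_distrib]
    rw [h2, Finset.mul_sum]
    refine Finset.sum_congr rfl fun i _ => ?_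
    ring
  rw [heq] at hpos
  have h3 := (mul_pos_iff_of_pos_left (div_pos hc0 hd)).mp hpos
  rw [div_lt_iff₀ hn']
  linarith
end

section
/- Let τ0 < τ1, let t_1, …, t_n ∈ [τ0, τ1], and let 0 ≤ c ≤ 1. Then the function μ ↦ M_n^{μ,+}(c) = ∏_{i=1}^n (1 − c·(t_i − μ)/(τ1 − μ)) is convex and monotone increasing on (−∞, τ1), and the function μ ↦ M_n^{μ,−}(c) = ∏_{i=1}^n (1 − c·(μ − t_i)/(μ − τ0)) is convex and monotone decreasing on (τ0, ∞). -/
open Finset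

lemma aux_mono {s : Set ℝ} {g : ℝ → ℝ} (hg0 : ∀ x ∈ s, 0 ≤ g x)
    {a : ℝ} (ha : 0 ≤ a) {ι : Type*} (S : Finset ι) (b : ι → ℝ) (hb : ∀ i, 0 ≤ b i)
    {x y : ℝ} (hx : x ∈ s) (hxy : g x ≤ g y) :
    ∏ i ∈ S, (a + b i * g x) ≤ ∏ i ∈ S, (a + b i * g y) := by
  apply Finset.prod_le_prod
  · intro i _
    have := mul_nonneg (hb i) (hg0 x hx)
    linarith
  · intro i _
    have := mul_le_mul_of_nonneg_left hxy (hb i)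
    linarith

lemma aux_convex {s : Set ℝ} {g : ℝ → ℝ} (hg : ConvexOn ℝ s g) (hg0 : ∀ x ∈ s, 0 ≤ g x)
    {a : ℝ} (ha : 0 ≤ a) {ι : Type*} (S : Finset ι) (b : ι → ℝ) (hb : ∀ i, 0 ≤ b i) :
    ConvexOn ℝ s (fun x => ∏ i ∈ S, (a + b i * g x)) := by
  classical
  induction S using Finset.induction_on with
  | empty => simpa using convexOn_const (1 : ℝ) hg.1
  | insert j S hj ih =>
    have h1 : ConvexOn ℝ s (fun x => a + b j * g x) := by
      have := (convexOn_const a hg.1).add (hg.smul (hb j))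
      simpa [Pi.add_def] using this
    have hn : ∀ i, ∀ x ∈ s, 0 ≤ a + b i * g x := fun i x hx => by
      have := mul_nonneg (hb i) (hg0 x hx)
      linarith
    have h2 := h1.mul ih (fun x hx => hn j x hx)
      (fun x hx => Finset.prod_nonneg fun i _ => hn i x hx) (by
        intro x hx y hy h
        by_contra! h3
        have h4 : g y ≤ g x := by
          by_contra! h5
          have := mul_le_mul_of_nonneg_left h5.le (hb j)
          linarith
        exact absurd h (not_lt.2 (aux_mono hg0 ha S b hb hy h4)))
    refine h2.congr ?_
    intro x _
    simp [Finset.prod_insert hj]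

lemma aux_inv : ConvexOn ℝ (Set.Ioi (0:ℝ)) (fun x => x⁻¹) := by
  simpa using convexOn_zpow (𝕜 := ℝ) (-1)

/-- Lemma 5, convexity in `μ`: for `τ0 < τ1`, `t_i ∈ [τ0, τ1]` and
`0 ≤ c ≤ 1`, the map `μ ↦ M_n^{μ,+}(c) = ∏_{i=1}^n (1 − c·(t_i − μ)/(τ1 − μ))` is convex
and monotone increasing on `(−∞, τ1)`, and the map
`μ ↦ M_n^{μ,−}(c) = ∏_{i=1}^n (1 − c·(μ − t_i)/(μ − τ0))` is convex and monotone
decreasing on `(τ0, ∞)`. -/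
theorem stmt18 (τ0 τ1 : ℝ) (hττ : τ0 < τ1) (n : ℕ) (t : Fin n → ℝ)
    (ht : ∀ i, t i ∈ Set.Icc τ0 τ1) (c : ℝ) (hc : c ∈ Set.Icc (0 : ℝ) 1) :
    (ConvexOn ℝ (Set.Iio τ1) (fun μ => ∏ i, (1 - c * (t i - μ) / (τ1 - μ))) ∧
        MonotoneOn (fun μ => ∏ i, (1 - c * (t i - μ) / (τ1 - μ))) (Set.Iio τ1)) ∧
      ConvexOn ℝ (Set.Ioi τ0) (fun μ => ∏ i, (1 - c * (μ - t i) / (μ - τ0))) ∧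
        AntitoneOn (fun μ => ∏ i, (1 - c * (μ - t i) / (μ - τ0))) (Set.Ioi τ0) := by
  obtain ⟨hc0, hc1⟩ := hc
  have ha : 0 ≤ 1 - c := by linarith
  have hb1 : ∀ i, 0 ≤ c * (τ1 - t i) := fun i => mul_nonneg hc0 (by linarith [(ht i).2])
  have hb0 : ∀ i, 0 ≤ c * (t i - τ0) := fun i => mul_nonneg hc0 (by linarith [(ht i).1])
  have hg1 : ConvexOn ℝ (Set.Iio τ1) (fun μ => (τ1 - μ)⁻¹) := by
    refine ⟨convex_Iio _, fun x hx y hy p q hp hq hpq => ?_⟩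
    have := aux_inv.2 (show τ1 - x ∈ Set.Ioi 0 from Set.mem_Ioi.2 (sub_pos.2 hx)) (show τ1 - y ∈ Set.Ioi 0 from Set.mem_Ioi.2 (sub_pos.2 hy))
      hp hq hpq
    have e : p • (τ1 - x) + q • (τ1 - y) = τ1 - (p • x + q • y) := by
      simp only [smul_eq_mul]
      linear_combination τ1 * hpq
    simp only [e] at this
    exact this
  have hg0 : ConvexOn ℝ (Set.Ioi τ0) (fun μ => (μ - τ0)⁻¹) := by
    refine ⟨convex_Ioi _, fun x hx y hy p q hp hq hpq => ?_⟩
    have := aux_inv.2 (show x - τ0 ∈ Set.Ioi 0 from Set.mem_Ioi.2 (sub_pos.2 hx)) (show y - τ0 ∈ Set.Ioi 0 from Set.mem_Ioi.2 (sub_pos.2 hy))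
      hp hq hpq
    have e : p • (x - τ0) + q • (y - τ0) = (p • x + q • y) - τ0 := by
      simp only [smul_eq_mul]
      linear_combination (-τ0) * hpq
    simp only [e] at this
    exact this
  have hp1 : ∀ x ∈ Set.Iio τ1, 0 ≤ (τ1 - x)⁻¹ := fun x hx => (inv_pos.2 (sub_pos.2 hx)).le
  have hp0 : ∀ x ∈ Set.Ioi τ0, 0 ≤ (x - τ0)⁻¹ := fun x hx => (inv_pos.2 (sub_pos.2 hx)).le
  have e1 : Set.EqOn (fun μ => ∏ i, ((1 - c) + c * (τ1 - t i) * (τ1 - μ)⁻¹))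
      (fun μ => ∏ i, (1 - c * (t i - μ) / (τ1 - μ))) (Set.Iio τ1) := by
    intro x hx
    have : τ1 - x ≠ 0 := (sub_pos.2 hx).ne'
    refine Finset.prod_congr rfl fun i _ => ?_
    field_simp
    ring
  have e0 : Set.EqOn (fun μ => ∏ i, ((1 - c) + c * (t i - τ0) * (μ - τ0)⁻¹))
      (fun μ => ∏ i, (1 - c * (μ - t i) / (μ - τ0))) (Set.Ioi τ0) := by
    intro x hx
    have : x - τ0 ≠ 0 := (sub_pos.2 hx).ne'
    refine Finset.prod_congr rfl fun i _ => ?_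
    field_simp
    ring
  refine ⟨⟨(aux_convex hg1 hp1 ha univ _ hb1).congr e1, MonotoneOn.congr ?_ e1⟩,
    (aux_convex hg0 hp0 ha univ _ hb0).congr e0, AntitoneOn.congr ?_ e0⟩
  · intro x hx y hy hxy
    exact aux_mono hp1 ha univ _ hb1 hx
      (inv_anti₀ (sub_pos.2 hy) (by linarith))
  · intro x hx y hy hxy
    exact aux_mono hp0 ha univ _ hb0 hy
      (inv_anti₀ (sub_pos.2 hx) (by linarith))
end
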